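/- Let p > n ≥ 2. There exist constants Θ = Θ(n,p) ≥ 0 and C = C(n,p) > 0 such that for every bounded domain Ω ⊂ ℝⁿ containing the origin, every u ∈ C_c^∞(Ω \ {0}), and every D ≥ e^Θ · diam(Ω), one has sup_{x ∈ Ω} { |u(x)| · |x|^{n/p − 1} · X^{1/p}(|x|/D) } ≤ C · ( ∫_Ω |∇u|^p dx − ((p−n)/p)^p ∫_Ω |u|^p/|x|^p dx )^{1/p}. -/

import Mathlib

open MeasureTheory Metric Set

/-!
In dimension `d`, write `H = (p - d) / p`, `b = H |u| / |y|`, `s` for the radial derivative of `|u|`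
and `X t = (1 - log t)⁻¹`. For a radial function `κ`, the vector field `b ^ p * (1 - κ) / H • y` is
compactly supported away from the origin, so its divergence integrates to zero. Subtracting it from
`|∇u| ^ p - b ^ p` leaves the Picone remainder of `|∇u|`, `b` and `s`, which is at least
`p / 2 * b ^ (p - 2) * (s - b) ^ 2`, plus terms in `κ` and `r κ'`. After completing the square, the
integrand is nonnegative as soon as the Riccati inequality `r κ' ≥ H p κ ^ 2` holds, and a surplus
`H ε` in that inequality on a set bounds `ε * ∫ (|∇u| ^ p + b ^ p)` over the set by a multiple of
the Hardy deficit.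

A perturbation of the logarithmic solution `X (r / D) / (p H)`, concentrated at the scale `|x|`,
has a surplus comparable to `X (|x| / D)` on the ball of centre `x` and radius `|x| / 2`. Morrey's
inequality on that ball turns this weighted local estimate into the pointwise bound, with `Θ = 0`.
-/

section Picone

/-- The remainder in Picone's inequality
`p (u / v) ^ (p - 1) ∂u · |∂v| ^ (p - 1) ≤ |∇u| ^ p + (p - 1) (u |∇v| / v) ^ p`, where `N = |∇u|`,
`b = u |∇v| / v` and `s` is the derivative of `u` in the direction of `∇v`. -/
noncomputable def piconeRemainder (p N b s : ℝ) : ℝ :=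
  N ^ p + (p - 1) * b ^ p - p * b ^ (p - 1) * s

variable {p N b s : ℝ}

theorem rpow_sub_one_eq_mul (hp : 2 ≤ p) (hb : 0 ≤ b) : b ^ (p - 1) = b ^ (p - 2) * b := by
  rw [← Real.rpow_add_one' hb (by linarith)]
  ring_nf

theorem rpow_eq_rpow_sub_two_mul_sq (hp : 2 ≤ p) (hb : 0 ≤ b) : b ^ p = b ^ (p - 2) * b ^ 2 := by
  rw [← Real.rpow_two, ← Real.rpow_add_of_nonneg hb (by linarith) zero_le_two]
  ring_nf

theorem mul_sq_le_piconeRemainder (hp : 2 ≤ p) (hb : 0 ≤ b) (hs : |s| ≤ N) :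
    p / 2 * (b ^ (p - 2) * (s - b) ^ 2) ≤ piconeRemainder p N b s := by
  have hN : 0 ≤ N := (abs_nonneg s).trans hs
  have hp0 : p ≠ 0 := by linarith
  have young : b ^ (p - 2) * N ^ 2 ≤ (p - 2) / p * b ^ p + 2 / p * N ^ p := by
    have h := Real.geom_mean_le_arith_mean2_weighted (w₁ := (p - 2) / p) (w₂ := 2 / p)
      (div_nonneg (by linarith) (by linarith)) (by positivity) (Real.rpow_nonneg hb p)
      (Real.rpow_nonneg hN p) (by field_simp; ring)
    rwa [← Real.rpow_mul hb, ← Real.rpow_mul hN, mul_div_cancel₀ _ hp0, mul_div_cancel₀ _ hp0,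
      Real.rpow_two] at h
  have hsN : b ^ (p - 2) * s ^ 2 ≤ b ^ (p - 2) * N ^ 2 :=
    mul_le_mul_of_nonneg_left (sq_le_sq' (abs_le.1 hs).1 (abs_le.1 hs).2) (Real.rpow_nonneg hb _)
  calc p / 2 * (b ^ (p - 2) * (s - b) ^ 2)
      = p / 2 * (b ^ (p - 2) * s ^ 2) + p / 2 * b ^ p - p * b ^ (p - 1) * s := by
        rw [rpow_sub_one_eq_mul hp hb, rpow_eq_rpow_sub_two_mul_sq hp hb]; ring
    _ ≤ p / 2 * ((p - 2) / p * b ^ p + 2 / p * N ^ p) + p / 2 * b ^ p - p * b ^ (p - 1) * s := by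
        gcongr
        exact hsN.trans young
    _ = piconeRemainder p N b s := by rw [piconeRemainder]; field_simp; ring

theorem piconeRemainder_nonneg (hp : 2 ≤ p) (hb : 0 ≤ b) (hs : |s| ≤ N) :
    0 ≤ piconeRemainder p N b s :=
  le_trans (by positivity) (mul_sq_le_piconeRemainder hp hb hs)

theorem rpow_le_two_mul_piconeRemainder_add (hp : 2 ≤ p) (hb : 0 ≤ b) (hs : |s| ≤ N) :
    N ^ p ≤ 2 * piconeRemainder p N b s + 2 * (p - 1) * b ^ p := by
  have hN : 0 ≤ N := (abs_nonneg s).trans hs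
  have hN2 := piconeRemainder_nonneg (b := 2 * b) (s := N) hp (by positivity) (abs_of_nonneg hN).le
  rw [piconeRemainder, Real.mul_rpow zero_le_two hb, Real.mul_rpow zero_le_two hb] at hN2
  have two_rpow : (2 : ℝ) ^ p = 2 ^ (p - 1) * 2 := by
    rw [← Real.rpow_add_one two_ne_zero, sub_add_cancel]
  have two_le : (2 : ℝ) ≤ 2 ^ (p - 1) := by
    simpa using Real.rpow_le_rpow_of_exponent_le one_le_two (by linarith : 1 ≤ p - 1)
  have young : p * b ^ (p - 1) * N ≤ 2 * (p - 1) * b ^ p + N ^ p / 2 := by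
    have hNp : N ^ p / 2 ^ (p - 1) ≤ N ^ p / 2 := by gcongr
    have : p * b ^ (p - 1) * N ≤ 2 * (p - 1) * b ^ p + N ^ p / 2 ^ (p - 1) := by
      rw [two_rpow] at hN2
      rw [← sub_le_iff_le_add', le_div_iff₀ (by positivity)]
      linarith
    linarith
  have cross : p * b ^ (p - 1) * s ≤ p * b ^ (p - 1) * N := by
    have := le_of_abs_le hs
    gcongr
  rw [piconeRemainder]
  linarith

theorem half_piconeRemainder_add_le {κ ε ω : ℝ} (hp : 2 ≤ p) (hb : 0 ≤ b) (hs : |s| ≤ N)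
    (hω : p * κ ^ 2 + ε ≤ ω) :
    piconeRemainder p N b s / 2 + ε * b ^ p ≤
      piconeRemainder p N b s + p * κ * (b ^ (p - 1) * (s - b)) + ω * b ^ p := by
  have hR := mul_sq_le_piconeRemainder hp hb hs
  have hsq : 0 ≤ p * b ^ (p - 2) * ((s - b) / 2 + κ * b) ^ 2 := by positivity
  have hωb : (p * κ ^ 2 + ε) * b ^ p ≤ ω * b ^ p := by gcongr
  rw [rpow_eq_rpow_sub_two_mul_sq hp hb] at hωb ⊢
  rw [rpow_sub_one_eq_mul hp hb]
  linarith

theorem mul_rpow_add_rpow_le_half_piconeRemainder_add {ε : ℝ} (hp : 2 ≤ p) (hb : 0 ≤ b)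
    (hs : |s| ≤ N) (hε₀ : 0 ≤ ε) (hε₁ : ε ≤ 1) :
    ε / (2 * p) * (N ^ p + b ^ p) ≤ piconeRemainder p N b s / 2 + ε * b ^ p := by
  have hR := piconeRemainder_nonneg hp hb hs
  have : 0 < p := by linarith
  calc ε / (2 * p) * (N ^ p + b ^ p)
      ≤ ε / (2 * p) * (2 * piconeRemainder p N b s + 2 * (p - 1) * b ^ p + b ^ p) := by
        gcongr
        exact rpow_le_two_mul_piconeRemainder_add hp hb hs
    _ = ε / p * piconeRemainder p N b s + (1 - 1 / (2 * p)) * (ε * b ^ p) := by field_simp; ring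
    _ ≤ 1 / 2 * piconeRemainder p N b s + 1 * (ε * b ^ p) := by
        gcongr
        exact sub_le_self _ (by positivity)
    _ = _ := by ring

end Picone

section Morrey

theorem setIntegral_le_measureReal_rpow_mul {X : Type*} [TopologicalSpace X] [T2Space X]
    [MeasurableSpace X] [OpensMeasurableSpace X] (μ : Measure X) [IsFiniteMeasureOnCompacts μ]
    {p : ℝ} (hp : 1 < p) {K : Set X} (hK : IsCompact K) {f : X → ℝ} (hf : Continuous f)
    (hf0 : ∀ y, 0 ≤ f y) :
    ∫ y in K, f y ∂μ ≤ μ.real K ^ (1 - 1 / p) * (∫ y in K, f y ^ p ∂μ) ^ (1 / p) := by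
  have hpq := Real.HolderConjugate.conjExponent hp
  have : IsFiniteMeasure (μ.restrict K) := ⟨by simpa using hK.measure_lt_top⟩
  have hfp : MemLp f (ENNReal.ofReal p) (μ.restrict K) := by
    obtain ⟨C, hC⟩ := hK.exists_bound_of_continuousOn hf.continuousOn
    exact .of_bound hf.aestronglyMeasurable C
      ((ae_restrict_iff' hK.measurableSet).2 (.of_forall hC))
  have h := integral_mul_le_Lp_mul_Lq_of_nonneg hpq (g := fun _ ↦ 1) (.of_forall hf0)
    (.of_forall fun _ ↦ zero_le_one) hfp (memLp_const _)
  have hq : 1 / p.conjExponent = 1 - 1 / p := by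
    simpa using eq_sub_of_add_eq' hpq.inv_add_inv_eq_one
  simpa [hq, mul_comm] using h

variable {E F : Type*} [NormedAddCommGroup E] [NormedSpace ℝ E] [NormedAddCommGroup F]
  [NormedSpace ℝ F]

theorem norm_apply_add_smul_sub_le_integral_norm_fderiv {u : E → F} (hu : ContDiff ℝ 1 u) (x : E)
    {y : E} (hy : ‖y‖ ≤ 1) {ρ : ℝ} (hρ : 0 ≤ ρ) :
    ‖u (x + ρ • y) - u x‖ ≤ ∫ t in 0..ρ, ‖fderiv ℝ u (x + t • y)‖ := by
  have hline (t : ℝ) : HasDerivAt (fun t : ℝ ↦ u (x + t • y)) (fderiv ℝ u (x + t • y) y) t := by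
    have : HasDerivAt (fun t : ℝ ↦ x + t • y) y t := by
      simpa using ((hasDerivAt_id t).smul_const y).const_add x
    exact (hu.differentiable one_ne_zero _).hasFDerivAt.comp_hasDerivAt t this
  have hcont : Continuous fun t : ℝ ↦ ‖fderiv ℝ u (x + t • y)‖ :=
    ((hu.continuous_fderiv one_ne_zero).comp (by fun_prop)).norm
  have h := norm_sub_le_integral_of_norm_deriv_le_of_le hρ
    (fun t _ ↦ (hline t).continuousAt.continuousWithinAt)
    (fun t _ ↦ (hline t).differentiableAt.differentiableWithinAt)
    (.of_forall fun t _ ↦ (hline t).deriv ▸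
      (fderiv ℝ u (x + t • y)).le_of_opNorm_le_of_le le_rfl hy)
    (by simpa using hcont.intervalIntegrable 0 ρ)
  simpa using h

variable [FiniteDimensional ℝ E] [MeasurableSpace E] [BorelSpace E] (μ : Measure E)
  [μ.IsAddHaarMeasure]

theorem setIntegral_closedBall_comp_add_smul (f : E → F) (x : E) {t : ℝ} (ht : 0 < t) :
    ∫ y in closedBall 0 1, f (x + t • y) ∂μ =
      (t ^ Module.finrank ℝ E)⁻¹ • ∫ y in closedBall x t, f y ∂μ := by
  rw [Measure.setIntegral_comp_smul_of_pos μ (fun z ↦ f (x + z)) _ ht,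
    smul_unitClosedBall_of_nonneg ht.le, ← (measurePreserving_add_left μ x).setIntegral_preimage_emb
      (measurableEmbedding_addLeft x) f (closedBall x t)]
  simp

theorem setIntegral_closedBall_comp_add_smul_le {p : ℝ} (hp : 1 < p) {f : E → ℝ}
    (hf : Continuous f) (hf0 : ∀ y, 0 ≤ f y) (x : E) {t : ℝ} (ht : 0 < t) :
    ∫ y in closedBall 0 1, f (x + t • y) ∂μ ≤ μ.real (closedBall 0 1) ^ (1 - 1 / p) *
      (t ^ (-(Module.finrank ℝ E / p)) * (∫ y in closedBall x t, f y ^ p ∂μ) ^ (1 / p)) := by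
  refine (setIntegral_le_measureReal_rpow_mul μ hp (isCompact_closedBall 0 1)
    (hf.comp (by fun_prop : Continuous fun y ↦ x + t • y)) fun y ↦ hf0 _).trans_eq ?_
  have hI : 0 ≤ ∫ y in closedBall x t, f y ^ p ∂μ :=
    integral_nonneg fun y ↦ Real.rpow_nonneg (hf0 y) p
  have ht' : ((t ^ Module.finrank ℝ E)⁻¹) ^ (1 / p) = t ^ (-(Module.finrank ℝ E / p)) := by
    rw [← Real.rpow_natCast, ← Real.rpow_neg ht.le, ← Real.rpow_mul ht.le]
    ring_nf
  simp only [Function.comp_apply]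
  rw [setIntegral_closedBall_comp_add_smul μ (f · ^ p) x ht, smul_eq_mul,
    Real.mul_rpow (by positivity) hI, ht']

theorem integral_norm_apply_add_smul_sub_le {u : E → F} (hu : ContDiff ℝ 1 u) (x : E) {ρ : ℝ}
    (hρ : 0 ≤ ρ) :
    ∫ y in closedBall 0 1, ‖u (x + ρ • y) - u x‖ ∂μ ≤
      ∫ t in 0..ρ, ∫ y in closedBall 0 1, ‖fderiv ℝ u (x + t • y)‖ ∂μ := by
  have hcont : Continuous fun z : ℝ × E ↦ ‖fderiv ℝ u (x + z.1 • z.2)‖ :=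
    ((hu.continuous_fderiv one_ne_zero).comp (by fun_prop)).norm
  have hcont' : Continuous (Function.uncurry fun y t ↦ ‖fderiv ℝ u (x + t • y)‖) :=
    ((hu.continuous_fderiv one_ne_zero).comp (by fun_prop :
      Continuous fun z : E × ℝ ↦ x + z.2 • z.1)).norm
  have hcontu : Continuous fun y ↦ ‖u (x + ρ • y) - u x‖ :=
    ((hu.continuous.comp (by fun_prop)).sub continuous_const).norm
  rw [intervalIntegral_integral_swap]
  · refine setIntegral_mono_on (hcontu.continuousOn.integrableOn_compact (isCompact_closedBall 0 1))
      ?_ measurableSet_closedBall fun y hy ↦ norm_apply_add_smul_sub_le_integral_norm_fderiv hu x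
        (mem_closedBall_zero_iff.1 hy) hρ
    exact (intervalIntegral.continuous_parametric_intervalIntegral_of_continuous'
      hcont' 0 ρ).continuousOn.integrableOn_compact (isCompact_closedBall 0 1)
  · rw [Measure.prod_restrict]
    exact (hcont.continuousOn.integrableOn_compact (isCompact_uIcc.prod
      (isCompact_closedBall 0 1))).mono_set (prod_mono_left uIoc_subset_uIcc)

theorem integral_norm_apply_add_smul_sub_le_rpow {p : ℝ} (hp : 1 < p)
    (hdp : Module.finrank ℝ E < p) {u : E → F} (hu : ContDiff ℝ 1 u) (x : E) {ρ : ℝ} (hρ : 0 ≤ ρ) :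
    ∫ y in closedBall 0 1, ‖u (x + ρ • y) - u x‖ ∂μ ≤ μ.real (closedBall 0 1) ^ (1 - 1 / p) *
      (ρ ^ (1 - Module.finrank ℝ E / p) / (1 - Module.finrank ℝ E / p) *
        (∫ y in closedBall x ρ, ‖fderiv ℝ u y‖ ^ p ∂μ) ^ (1 / p)) := by
  have hp0 : 0 < p := by linarith
  have hα : -1 < -(Module.finrank ℝ E / p) := neg_lt_neg ((div_lt_one hp0).2 hdp)
  have hcont : Continuous fun y ↦ ‖fderiv ℝ u y‖ := (hu.continuous_fderiv one_ne_zero).norm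
  have hcontp : Continuous fun y ↦ ‖fderiv ℝ u y‖ ^ p := hcont.rpow_const fun _ ↦ .inr hp0.le
  set J := ∫ y in closedBall x ρ, ‖fderiv ℝ u y‖ ^ p ∂μ
  have hJ (t : ℝ) (ht : t ≤ ρ) : ∫ y in closedBall x t, ‖fderiv ℝ u y‖ ^ p ∂μ ≤ J :=
    setIntegral_mono_set (hcontp.continuousOn.integrableOn_compact (isCompact_closedBall x ρ))
      (.of_forall fun y ↦ by positivity) (closedBall_subset_closedBall ht).eventuallyLE
  have hmean : Continuous fun t : ℝ ↦ ∫ y in closedBall 0 1, ‖fderiv ℝ u (x + t • y)‖ ∂μ :=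
    continuous_parametric_integral_of_continuous (f := fun (t : ℝ) y ↦ ‖fderiv ℝ u (x + t • y)‖)
      (hcont.comp (by fun_prop : Continuous fun z : ℝ × E ↦ x + z.1 • z.2))
      (isCompact_closedBall 0 1)
  calc ∫ y in closedBall 0 1, ‖u (x + ρ • y) - u x‖ ∂μ
      ≤ ∫ t in 0..ρ, ∫ y in closedBall 0 1, ‖fderiv ℝ u (x + t • y)‖ ∂μ :=
        integral_norm_apply_add_smul_sub_le μ hu x hρ
    _ ≤ ∫ t in 0..ρ, μ.real (closedBall 0 1) ^ (1 - 1 / p) *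
          (t ^ (-(Module.finrank ℝ E / p)) * J ^ (1 / p)) := by
        refine intervalIntegral.integral_mono_on_of_le_Ioo hρ (hmean.intervalIntegrable 0 ρ)
          (((intervalIntegral.intervalIntegrable_rpow' hα).mul_const _).const_mul _) fun t ht ↦ ?_
        refine (setIntegral_closedBall_comp_add_smul_le μ hp hcont (fun y ↦ norm_nonneg _) x
          ht.1).trans ?_
        have := hJ t ht.2.le
        have := ht.1
        gcongr
    _ = _ := by
        rw [intervalIntegral.integral_const_mul, intervalIntegral.integral_mul_const,
          integral_rpow (.inl hα), Real.zero_rpow (by linarith)]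
        ring_nf

theorem morrey_closedBall {p : ℝ} (hp : 1 < p) (hdp : Module.finrank ℝ E < p) {u : E → F}
    (hu : ContDiff ℝ 1 u) (x : E) {ρ : ℝ} (hρ : 0 < ρ) :
    μ.real (closedBall (0 : E) 1) ^ (1 / p) * ‖u x‖ ≤
      ρ ^ (-(Module.finrank ℝ E / p)) * (∫ y in closedBall x ρ, ‖u y‖ ^ p ∂μ) ^ (1 / p) +
      ρ ^ (1 - Module.finrank ℝ E / p) / (1 - Module.finrank ℝ E / p) *
        (∫ y in closedBall x ρ, ‖fderiv ℝ u y‖ ^ p ∂μ) ^ (1 / p) := by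
  set V := μ.real (closedBall (0 : E) 1) with hV
  have hVpos : 0 < V :=
    ENNReal.toReal_pos (measure_closedBall_pos μ 0 one_pos).ne' measure_closedBall_lt_top.ne
  have hline : Continuous fun y : E ↦ u (x + ρ • y) := hu.continuous.comp (by fun_prop)
  have hint {f : E → ℝ} (hf : Continuous f) : IntegrableOn f (closedBall 0 1) μ :=
    hf.continuousOn.integrableOn_compact (isCompact_closedBall 0 1)
  have htri : V * ‖u x‖ ≤ (∫ y in closedBall 0 1, ‖u (x + ρ • y)‖ ∂μ) +
      ∫ y in closedBall 0 1, ‖u (x + ρ • y) - u x‖ ∂μ := by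
    have hsub : Continuous fun y : E ↦ ‖u (x + ρ • y) - u x‖ := (hline.sub continuous_const).norm
    rw [← integral_add (hint hline.norm) (hint hsub)]
    calc V * ‖u x‖ = ∫ _ in closedBall (0 : E) 1, ‖u x‖ ∂μ := by simp [hV]
      _ ≤ _ := setIntegral_mono_on (hint continuous_const) (hint (hline.norm.add hsub))
        measurableSet_closedBall fun y _ ↦ norm_le_norm_add_norm_sub _ _
  have hmean := setIntegral_closedBall_comp_add_smul_le μ hp hu.continuous.norm
    (fun _ ↦ norm_nonneg _) x hρ
  have hosc := integral_norm_apply_add_smul_sub_le_rpow μ hp hdp hu x hρ.le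
  refine le_of_mul_le_mul_left ?_ (Real.rpow_pos_of_pos hVpos (1 - 1 / p))
  calc V ^ (1 - 1 / p) * (V ^ (1 / p) * ‖u x‖) = V * ‖u x‖ := by
        rw [← mul_assoc, ← Real.rpow_add hVpos, sub_add_cancel, Real.rpow_one]
    _ ≤ _ := htri.trans ((add_le_add hmean hosc).trans_eq (mul_add _ _ _).symm)

end Morrey

section RadialDerivative

variable {E : Type*} [NormedAddCommGroup E] [NormedSpace ℝ E] [MeasurableSpace E] [BorelSpace E]
  (μ : Measure E)

theorem integrable_fderiv_apply_self [IsFiniteMeasureOnCompacts μ] {Φ : E → ℝ}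
    (hΦ : ContDiff ℝ 1 Φ) (hc : HasCompactSupport Φ) :
    Integrable (fun y ↦ fderiv ℝ Φ y y) μ :=
  ((hΦ.continuous_fderiv one_ne_zero).clm_apply continuous_id).integrable_of_hasCompactSupport <|
    (hc.fderiv ℝ).mono fun y hy ↦ by contrapose! hy; simp_all

variable [FiniteDimensional ℝ E] [μ.IsAddHaarMeasure]

theorem integral_fderiv_apply_self {Φ : E → ℝ} (hΦ : ContDiff ℝ 1 Φ) (hc : HasCompactSupport Φ) :
    ∫ y, fderiv ℝ Φ y y ∂μ = -(Module.finrank ℝ E * ∫ y, Φ y ∂μ) := by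
  let b := Module.finBasis ℝ E
  let coord (i) : E →L[ℝ] ℝ := (b.coord i).toContinuousLinearMap
  have hdΦ (v : E) : Continuous fun y ↦ fderiv ℝ Φ y v :=
    (hΦ.continuous_fderiv one_ne_zero).clm_apply continuous_const
  have hcdΦ (v : E) : HasCompactSupport fun y ↦ fderiv ℝ Φ y v := hc.fderiv_apply ℝ v
  have hint (i) : Integrable (fun y ↦ coord i y * fderiv ℝ Φ y (b i)) μ :=
    ((coord i).continuous.mul (hdΦ _)).integrable_of_hasCompactSupport (hcdΦ _).mul_left
  have hpart (i) : ∫ y, coord i y * fderiv ℝ Φ y (b i) ∂μ = -∫ y, Φ y ∂μ := by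
    have hcoord : coord i (b i) = 1 := by simp [coord]
    rw [integral_mul_fderiv_eq_neg_fderiv_mul_of_integrable _ (hint i)
      (((coord i).continuous.mul hΦ.continuous).integrable_of_hasCompactSupport hc.mul_left)
      (fun y _ ↦ (coord i).differentiableAt) fun y _ ↦ hΦ.differentiable one_ne_zero y]
    · simp [hcoord]
    · simpa [hcoord] using hΦ.continuous.integrable_of_hasCompactSupport hc
  calc ∫ y, fderiv ℝ Φ y y ∂μ = ∫ y, ∑ i, coord i y * fderiv ℝ Φ y (b i) ∂μ := by
        congr with y
        conv_lhs => rw [← b.sum_repr y, map_sum]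
        simp [coord]
    _ = -(Module.finrank ℝ E * ∫ y, Φ y ∂μ) := by
        rw [integral_finsetSum _ fun i _ ↦ hint i]
        simp [hpart]

end RadialDerivative

section Hardy

theorem contDiff_mul_of_contDiffAt_tsupport {E : Type*} [NormedAddCommGroup E] [NormedSpace ℝ E]
    {n : WithTop ℕ∞} {f g : E → ℝ} (hf : ContDiff ℝ n f)
    (hg : ∀ y ∈ tsupport f, ContDiffAt ℝ n g y) : ContDiff ℝ n fun y ↦ f y * g y := by
  refine contDiff_iff_contDiffAt.2 fun y ↦ ?_
  by_cases hy : y ∈ tsupport f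
  · exact hf.contDiffAt.mul (hg y hy)
  · refine contDiffAt_const (c := 0) |>.congr_of_eventuallyEq ?_
    filter_upwards [notMem_tsupport_iff_eventuallyEq.1 hy] with z hz
    simp [hz]

variable {E : Type*} [NormedAddCommGroup E] [InnerProductSpace ℝ E]

theorem fderiv_comp_norm_apply_self {g : ℝ → ℝ} {y : E} (hy : y ≠ 0)
    (hg : DifferentiableAt ℝ g ‖y‖) : fderiv ℝ (fun z ↦ g ‖z‖) y y = ‖y‖ * deriv g ‖y‖ := by
  have hnorm := (contDiffAt_norm ℝ hy (n := 1)).differentiableAt one_ne_zero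
  rw [fderiv_fun_comp y hg hnorm]
  simp [hnorm.fderiv_norm_self]

variable (E) in
/-- The Hölder exponent of Morrey's embedding of `W^{1,p}`; its `p`-th power is the sharp constant
in Hardy's inequality. -/
noncomputable def morreyExponent (p : ℝ) : ℝ :=
  (p - Module.finrank ℝ E) / p

/-- The Hardy term `H |u| / |y|`, where `H` is the Morrey exponent. -/
noncomputable def hardyTerm (p : ℝ) (u : E → ℝ) (y : E) : ℝ :=
  |u y| * (morreyExponent E p / ‖y‖)

/-- The derivative of `|u|` in the outward radial direction `y / |y|`, set to `0` where `u = 0`. -/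
noncomputable def radialSlope (u : E → ℝ) (y : E) : ℝ :=
  SignType.sign (u y) * fderiv ℝ u y y / ‖y‖

variable {p : ℝ} {u : E → ℝ} {y : E}

theorem mul_morreyExponent (hp : p ≠ 0) : p * morreyExponent E p = p - Module.finrank ℝ E :=
  mul_div_cancel₀ _ hp

theorem one_sub_finrank_div (hp : p ≠ 0) : 1 - Module.finrank ℝ E / p = morreyExponent E p := by
  rw [morreyExponent, sub_div, div_self hp]

theorem morreyExponent_pos (hdp : Module.finrank ℝ E < p) : 0 < morreyExponent E p :=
  div_pos (sub_pos.2 hdp) ((Nat.cast_nonneg _).trans_lt hdp)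

theorem hardyTerm_nonneg (hdp : Module.finrank ℝ E < p) (u : E → ℝ) (y : E) :
    0 ≤ hardyTerm p u y :=
  mul_nonneg (abs_nonneg _) (div_nonneg (morreyExponent_pos hdp).le (norm_nonneg y))

theorem abs_radialSlope_le (u : E → ℝ) (y : E) : |radialSlope u y| ≤ ‖fderiv ℝ u y‖ := by
  have hsign : |(SignType.sign (u y) : ℝ)| ≤ 1 := by
    rcases lt_trichotomy (u y) 0 with h | h | h <;> simp [h]
  rw [radialSlope, abs_div, abs_mul, abs_norm]
  refine div_le_of_le_mul₀ (norm_nonneg y) (norm_nonneg _) ?_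
  exact (mul_le_of_le_one_left (abs_nonneg _) hsign).trans ((fderiv ℝ u y).le_opNorm y)

theorem hardyTerm_rpow (hdp : Module.finrank ℝ E < p) (u : E → ℝ) (y : E) :
    hardyTerm p u y ^ p = |u y| ^ p * (morreyExponent E p / ‖y‖) ^ p :=
  Real.mul_rpow (abs_nonneg _) (div_nonneg (morreyExponent_pos hdp).le (norm_nonneg y))

theorem contDiff_hardyTerm_rpow (hp : 1 < p) (hdp : Module.finrank ℝ E < p) (hu : ContDiff ℝ 1 u)
    (h0 : 0 ∉ tsupport u) : ContDiff ℝ 1 fun y ↦ hardyTerm p u y ^ p := by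
  simp only [hardyTerm_rpow hdp]
  have hsupp : tsupport (fun y ↦ |u y| ^ p) ⊆ tsupport u :=
    closure_mono fun y hy hu ↦ hy (by simp [hu, (zero_lt_one.trans hp).ne'])
  refine contDiff_mul_of_contDiffAt_tsupport (hu.norm_rpow hp) fun y hy ↦ ?_
  have hy0 : y ≠ 0 := ne_of_mem_of_not_mem (hsupp hy) h0
  have hH := morreyExponent_pos hdp
  exact (contDiffAt_const.div (contDiffAt_norm ℝ hy0) (norm_ne_zero_iff.2 hy0)).rpow_const_of_ne
    (div_pos hH (norm_pos_iff.2 hy0)).ne'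

theorem abs_rpow_sub_two_mul_self {a : ℝ} :
    |a| ^ (p - 2) * a = |a| ^ (p - 1) * SignType.sign a := by
  rcases eq_or_ne a 0 with rfl | ha
  · simp
  · rw [← sub_add_cancel (p - 1) 1, Real.rpow_add_one (abs_ne_zero.2 ha), mul_assoc, abs_mul_sign]
    ring_nf

theorem hasDerivAt_div_rpow {c r : ℝ} (hc : c ≠ 0) (hr : r ≠ 0) :
    HasDerivAt (fun r ↦ (c / r) ^ p) (-p * (c / r) ^ p / r) r := by
  have h := ((hasDerivAt_inv hr).const_mul c).rpow_const (p := p) (.inl (by positivity))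
  simp only [← div_eq_mul_inv] at h
  convert h using 1
  rw [Real.rpow_sub_one (by positivity)]
  field_simp

theorem fderiv_hardyTerm_rpow_apply_self (hp : 1 < p) (hdp : Module.finrank ℝ E < p)
    (hu : DifferentiableAt ℝ u y) (hy : y ≠ 0) :
    fderiv ℝ (fun z ↦ hardyTerm p u z ^ p) y y =
      p * (morreyExponent E p * hardyTerm p u y ^ (p - 1) * radialSlope u y -
        hardyTerm p u y ^ p) := by
  have hH := morreyExponent_pos hdp
  have hr : 0 < ‖y‖ := norm_pos_iff.2 hy
  have hweight := hasDerivAt_div_rpow (p := p) hH.ne' hr.ne'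
  have hweight' : DifferentiableAt ℝ (fun z ↦ (morreyExponent E p / ‖z‖) ^ p) y :=
    hweight.differentiableAt.comp y ((contDiffAt_norm ℝ hy (n := 1)).differentiableAt one_ne_zero)
  have habs : HasFDerivAt (fun z ↦ |u z| ^ p) _ y :=
    (hasDerivAt_abs_rpow (u y) hp).comp_hasFDerivAt y hu.hasFDerivAt
  have hpow : hardyTerm p u y ^ (p - 1) =
      |u y| ^ (p - 1) * ((morreyExponent E p / ‖y‖) ^ p * (‖y‖ / morreyExponent E p)) := by
    rw [hardyTerm, Real.mul_rpow (abs_nonneg _) (by positivity),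
      Real.rpow_sub_one (by positivity : morreyExponent E p / ‖y‖ ≠ 0)]
    field_simp
  simp only [hpow, hardyTerm_rpow hdp, radialSlope]
  rw [fderiv_fun_mul habs.differentiableAt hweight', habs.fderiv, mul_assoc p,
    abs_rpow_sub_two_mul_self]
  simp only [add_apply, smul_apply, smul_eq_mul,
    fderiv_comp_norm_apply_self hy hweight.differentiableAt, hweight.deriv]
  field_simp
  ring

/-- The radial component of the vector field `y ↦ potential • y` whose divergence is subtracted
from `|∇u| ^ p - (H |u| / |y|) ^ p`; taking `κ = 0` gives Hardy's inequality. -/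
noncomputable def hardyPotential (p : ℝ) (κ : ℝ → ℝ) (u : E → ℝ) (y : E) : ℝ :=
  hardyTerm p u y ^ p * ((1 - κ ‖y‖) / morreyExponent E p)

/-- The integrand of the Hardy deficit, up to the divergence of `y ↦ hardyPotential p κ u y • y`. -/
noncomputable def hardyDensity (p : ℝ) (κ : ℝ → ℝ) (u : E → ℝ) (y : E) : ℝ :=
  ‖fderiv ℝ u y‖ ^ p - hardyTerm p u y ^ p -
    (fderiv ℝ (hardyPotential p κ u) y y + Module.finrank ℝ E * hardyPotential p κ u y)

theorem tsupport_hardyTerm_rpow_subset (hp : p ≠ 0) :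
    tsupport (fun y ↦ hardyTerm p u y ^ p) ⊆ tsupport u :=
  closure_mono fun y hy hu ↦ hy (by simp [hardyTerm, hu, hp])

variable {κ : ℝ → ℝ}

theorem contDiff_hardyPotential (hp : 1 < p) (hdp : Module.finrank ℝ E < p) (hu : ContDiff ℝ 1 u)
    (h0 : 0 ∉ tsupport u) (hκ : ∀ y ∈ tsupport u, ContDiffAt ℝ 1 κ ‖y‖) :
    ContDiff ℝ 1 (hardyPotential p κ u) := by
  refine contDiff_mul_of_contDiffAt_tsupport (contDiff_hardyTerm_rpow hp hdp hu h0) fun y hy ↦ ?_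
  have hyu := tsupport_hardyTerm_rpow_subset (by positivity) hy
  exact (contDiffAt_const.sub ((hκ y hyu).comp y
    (contDiffAt_norm ℝ (ne_of_mem_of_not_mem hyu h0)))).div_const _

theorem hardyDensity_of_notMem_tsupport (hp : p ≠ 0) (hy : y ∉ tsupport u) :
    hardyDensity p κ u y = 0 := by
  have hΦ : hardyPotential p κ u =ᶠ[nhds y] fun _ ↦ 0 := by
    filter_upwards [notMem_tsupport_iff_eventuallyEq.1 hy] with z hz
    simp [hardyPotential, hardyTerm, hz, hp]
  simp [hardyDensity, hΦ.fderiv_eq, hΦ.eq_of_nhds, fderiv_of_notMem_tsupport ℝ hy, hardyTerm,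
    image_eq_zero_of_notMem_tsupport hy, hp]

theorem fderiv_hardyPotential_apply_self (hp : 1 < p) (hdp : Module.finrank ℝ E < p)
    (hu : ContDiff ℝ 1 u) (h0 : 0 ∉ tsupport u) (hy : y ≠ 0) (hκ : DifferentiableAt ℝ κ ‖y‖) :
    fderiv ℝ (hardyPotential p κ u) y y =
      (1 - κ ‖y‖) / morreyExponent E p *
        (p * (morreyExponent E p * hardyTerm p u y ^ (p - 1) * radialSlope u y -
          hardyTerm p u y ^ p)) -
        hardyTerm p u y ^ p * (‖y‖ * deriv κ ‖y‖ / morreyExponent E p) := by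
  have hg : DifferentiableAt ℝ (fun r ↦ (1 - κ r) / morreyExponent E p) ‖y‖ :=
    (hκ.const_sub 1).div_const _
  have hfactor : fderiv ℝ (fun z ↦ (1 - κ ‖z‖) / morreyExponent E p) y y =
      -(‖y‖ * deriv κ ‖y‖ / morreyExponent E p) := by
    rw [fderiv_comp_norm_apply_self hy hg, deriv_div_const, deriv_const_sub]
    ring
  have hg' : DifferentiableAt ℝ (fun z ↦ (1 - κ ‖z‖) / morreyExponent E p) y :=
    hg.comp y ((contDiffAt_norm ℝ hy (n := 1)).differentiableAt one_ne_zero)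
  unfold hardyPotential
  rw [fderiv_fun_mul ((contDiff_hardyTerm_rpow hp hdp hu h0).differentiable one_ne_zero y)
    hg', add_apply, smul_apply, smul_apply, hfactor,
    fderiv_hardyTerm_rpow_apply_self hp hdp (hu.differentiable one_ne_zero y) hy]
  simp only [smul_eq_mul]
  ring

theorem hardyDensity_eq (hp : 1 < p) (hdp : Module.finrank ℝ E < p) (hu : ContDiff ℝ 1 u)
    (h0 : 0 ∉ tsupport u) (hy : y ≠ 0) (hκ : DifferentiableAt ℝ κ ‖y‖) :
    hardyDensity p κ u y =
      piconeRemainder p ‖fderiv ℝ u y‖ (hardyTerm p u y) (radialSlope u y) +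
        p * κ ‖y‖ * (hardyTerm p u y ^ (p - 1) * (radialSlope u y - hardyTerm p u y)) +
        ‖y‖ * deriv κ ‖y‖ / morreyExponent E p * hardyTerm p u y ^ p := by
  have hb : hardyTerm p u y ^ p = hardyTerm p u y ^ (p - 1) * hardyTerm p u y := by
    rw [← Real.rpow_add_one' (hardyTerm_nonneg hdp u y) (by linarith), sub_add_cancel]
  have hd : (Module.finrank ℝ E : ℝ) = p - p * morreyExponent E p := by
    rw [mul_morreyExponent (by positivity)]
    ring
  have hH := morreyExponent_pos hdp
  rw [hardyDensity, fderiv_hardyPotential_apply_self hp hdp hu h0 hy hκ, hardyPotential, hd,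
    piconeRemainder, hb]
  field_simp
  ring

theorem mul_rpow_add_rpow_le_hardyDensity (hp : 2 ≤ p) (hdp : Module.finrank ℝ E < p)
    (hu : ContDiff ℝ 1 u) (h0 : 0 ∉ tsupport u) (hy : y ≠ 0)
    (hκ : DifferentiableAt ℝ κ ‖y‖) {ε : ℝ} (hε₀ : 0 ≤ ε) (hε₁ : ε ≤ 1)
    (hric : morreyExponent E p * (p * κ ‖y‖ ^ 2 + ε) ≤ ‖y‖ * deriv κ ‖y‖) :
    ε / (2 * p) * (‖fderiv ℝ u y‖ ^ p + hardyTerm p u y ^ p) ≤ hardyDensity p κ u y := by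
  have hb := hardyTerm_nonneg hdp u y
  have hs := abs_radialSlope_le u y
  rw [hardyDensity_eq (by linarith) hdp hu h0 hy hκ]
  refine (mul_rpow_add_rpow_le_half_piconeRemainder_add hp hb hs hε₀ hε₁).trans
    (half_piconeRemainder_add_le hp hb hs ?_)
  rwa [le_div_iff₀' (morreyExponent_pos hdp)]

end Hardy

section Deficit

variable {E : Type*} [NormedAddCommGroup E] [InnerProductSpace ℝ E] [MeasurableSpace E]
  (μ : Measure E) {p : ℝ} {u : E → ℝ} {κ : ℝ → ℝ}

/-- The difference of the two sides of Hardy's inequality in `L^p`, with its sharp constant. -/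
noncomputable def hardyDeficit (p : ℝ) (u : E → ℝ) : ℝ :=
  (∫ y, ‖fderiv ℝ u y‖ ^ p ∂μ) - morreyExponent E p ^ p * ∫ y, |u y| ^ p / ‖y‖ ^ p ∂μ

theorem hardyDeficit_eq_integral_sub_integral (hdp : Module.finrank ℝ E < p) (u : E → ℝ) :
    hardyDeficit μ p u = (∫ y, ‖fderiv ℝ u y‖ ^ p ∂μ) - ∫ y, hardyTerm p u y ^ p ∂μ := by
  simp only [hardyDeficit, hardyTerm_rpow hdp, ← integral_const_mul,
    Real.div_rpow (morreyExponent_pos hdp).le (norm_nonneg _), mul_div_left_comm]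

theorem hardyDeficit_restrict_of_tsupport_subset (hp : p ≠ 0) {Ω : Set E} (hΩ : tsupport u ⊆ Ω) :
    hardyDeficit (μ.restrict Ω) p u = hardyDeficit μ p u := by
  rw [hardyDeficit, hardyDeficit, setIntegral_eq_integral_of_forall_compl_eq_zero,
    setIntegral_eq_integral_of_forall_compl_eq_zero]
  · intro y hy
    simp [image_eq_zero_of_notMem_tsupport (fun h ↦ hy (hΩ h)), hp]
  · intro y hy
    simp [fderiv_of_notMem_tsupport ℝ (fun h ↦ hy (hΩ h)), hp]

variable [BorelSpace E]

theorem integrable_norm_fderiv_rpow [IsFiniteMeasureOnCompacts μ] (hp : 0 < p)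
    (hu : ContDiff ℝ 1 u) (hc : HasCompactSupport u) :
    Integrable (fun y ↦ ‖fderiv ℝ u y‖ ^ p) μ :=
  ((hu.continuous_fderiv one_ne_zero).norm.rpow_const fun _ ↦ .inr hp.le)
    |>.integrable_of_hasCompactSupport ((hc.fderiv ℝ).norm.rpow_const hp.ne')

theorem integrable_hardyTerm_rpow [IsFiniteMeasureOnCompacts μ] (hp : 1 < p)
    (hdp : Module.finrank ℝ E < p) (hu : ContDiff ℝ 1 u) (hc : HasCompactSupport u)
    (h0 : 0 ∉ tsupport u) : Integrable (fun y ↦ hardyTerm p u y ^ p) μ :=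
  (contDiff_hardyTerm_rpow hp hdp hu h0).continuous.integrable_of_hasCompactSupport <|
    hc.of_isClosed_subset (isClosed_tsupport _) (tsupport_hardyTerm_rpow_subset (by positivity))

variable [FiniteDimensional ℝ E] [μ.IsAddHaarMeasure]

theorem integrable_hardyDensity_and_integral_eq (hp : 1 < p) (hdp : Module.finrank ℝ E < p)
    (hu : ContDiff ℝ 1 u) (hc : HasCompactSupport u) (h0 : 0 ∉ tsupport u)
    (hκ : ∀ y ∈ tsupport u, ContDiffAt ℝ 1 κ ‖y‖) :
    Integrable (hardyDensity p κ u) μ ∧ ∫ y, hardyDensity p κ u y ∂μ = hardyDeficit μ p u := by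
  have hΦ := contDiff_hardyPotential hp hdp hu h0 hκ
  have hΦc : HasCompactSupport (hardyPotential p κ u) :=
    hc.of_isClosed_subset (isClosed_tsupport _)
      (tsupport_mul_subset_left.trans (tsupport_hardyTerm_rpow_subset (by positivity)))
  have hN := integrable_norm_fderiv_rpow μ (by positivity) hu hc
  have hb := integrable_hardyTerm_rpow μ hp hdp hu hc h0
  have hΦ₀ := (hΦ.continuous.integrable_of_hasCompactSupport (μ := μ) hΦc).const_mul
    (Module.finrank ℝ E : ℝ)
  have hΦ₁ := integrable_fderiv_apply_self μ hΦ hΦc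
  refine ⟨(hN.sub hb).sub (hΦ₁.add hΦ₀), ?_⟩
  refine (integral_sub (hN.sub hb) (hΦ₁.add hΦ₀)).trans ?_
  rw [integral_sub' hN hb, integral_add' hΦ₁ hΦ₀, integral_fderiv_apply_self μ hΦ hΦc,
    integral_const_mul, hardyDeficit_eq_integral_sub_integral μ hdp]
  ring

theorem mul_setIntegral_le_hardyDeficit (hp : 2 ≤ p) (hdp : Module.finrank ℝ E < p)
    (hu : ContDiff ℝ 1 u) (hc : HasCompactSupport u) (h0 : 0 ∉ tsupport u)
    (hκ : ∀ y ∈ tsupport u, ContDiffAt ℝ 1 κ ‖y‖)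
    (hric : ∀ y ∈ tsupport u, morreyExponent E p * (p * κ ‖y‖ ^ 2) ≤ ‖y‖ * deriv κ ‖y‖)
    {ε : ℝ} (hε₀ : 0 ≤ ε) (hε₁ : ε ≤ 1) {S : Set E} (hS : MeasurableSet S)
    (hgain : ∀ y ∈ S ∩ tsupport u,
      morreyExponent E p * (p * κ ‖y‖ ^ 2 + ε) ≤ ‖y‖ * deriv κ ‖y‖) :
    ε / (2 * p) * ∫ y in S, (‖fderiv ℝ u y‖ ^ p + hardyTerm p u y ^ p) ∂μ ≤
      hardyDeficit μ p u := by
  have hp1 : 1 < p := by linarith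
  obtain ⟨hint, hdef⟩ := integrable_hardyDensity_and_integral_eq μ hp1 hdp hu hc h0 hκ
  rw [← hdef, ← integral_const_mul, ← integral_indicator hS]
  refine integral_mono (((integrable_norm_fderiv_rpow μ (by positivity) hu hc).add
    (integrable_hardyTerm_rpow μ hp1 hdp hu hc h0)).const_mul _ |>.indicator hS) hint fun y ↦ ?_
  by_cases hy : y ∈ tsupport u
  · have hy0 := ne_of_mem_of_not_mem hy h0
    have hκy := (hκ y hy).differentiableAt one_ne_zero
    by_cases hyS : y ∈ S
    · simpa [hyS] using mul_rpow_add_rpow_le_hardyDensity hp hdp hu h0 hy0 hκy hε₀ hε₁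
        (hgain y ⟨hyS, hy⟩)
    · simpa [hyS] using mul_rpow_add_rpow_le_hardyDensity hp hdp hu h0 hy0 hκy le_rfl zero_le_one
        (by simpa using hric y hy)
  · rw [hardyDensity_of_notMem_tsupport (by positivity) hy]
    refine (indicator_apply_eq_zero.2 fun _ ↦ ?_).le
    simp [fderiv_of_notMem_tsupport ℝ hy, hardyTerm, image_eq_zero_of_notMem_tsupport hy,
      Real.zero_rpow (by positivity : p ≠ 0)]

theorem hardyDeficit_nonneg (hp : 2 ≤ p) (hdp : Module.finrank ℝ E < p) (hu : ContDiff ℝ 1 u)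
    (hc : HasCompactSupport u) (h0 : 0 ∉ tsupport u) : 0 ≤ hardyDeficit μ p u := by
  simpa using mul_setIntegral_le_hardyDeficit μ (κ := fun _ ↦ 0) hp hdp hu hc h0
    (fun _ _ ↦ contDiffAt_const) (by simp) le_rfl zero_le_one .empty (by simp)

end Deficit

section Riccati

/-- The reciprocal of the logarithmic weight `X (r / D)`, where `X t = (1 - log t)⁻¹`. -/
noncomputable def logGauge (D r : ℝ) : ℝ :=
  1 - Real.log (r / D)

/-- A subsolution of the Riccati equation `r κ' = c κ ^ 2`. For `r₀ = 0` it is the exact solution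
`X (r / D) / c`; the term with `r₀` makes the inequality strict at distances comparable to `r₀`. -/
noncomputable def riccatiSubsolution (c D r₀ r : ℝ) : ℝ :=
  (c * (logGauge D r + logGauge D r₀ * (r₀ / r)))⁻¹

variable {c D r r₀ : ℝ}

theorem one_le_logGauge (hr : 0 ≤ r) (hrD : r ≤ D) : 1 ≤ logGauge D r := by
  have : Real.log (r / D) ≤ 0 :=
    Real.log_nonpos (div_nonneg hr (hr.trans hrD)) (div_le_one_of_le₀ hrD (hr.trans hrD))
  rw [logGauge]
  linarith

theorem one_le_logGauge_add (hr : 0 < r) (hrD : r ≤ D) (hr₀ : 0 ≤ r₀) (hr₀D : r₀ ≤ D) :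
    1 ≤ logGauge D r + logGauge D r₀ * (r₀ / r) := by
  have := one_le_logGauge hr.le hrD
  have := one_le_logGauge hr₀ hr₀D
  have : 0 ≤ logGauge D r₀ * (r₀ / r) := by positivity
  linarith

theorem contDiffAt_riccatiSubsolution (hc : c ≠ 0) (hr : 0 < r) (hrD : r ≤ D) (hr₀ : 0 ≤ r₀)
    (hr₀D : r₀ ≤ D) : ContDiffAt ℝ 1 (riccatiSubsolution c D r₀) r := by
  have hψ := one_le_logGauge_add hr hrD hr₀ hr₀D
  have hD : D ≠ 0 := (hr.trans_le hrD).ne'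
  have : r / D ≠ 0 := by positivity
  have := hr.ne'
  unfold riccatiSubsolution logGauge at *
  refine ContDiffAt.inv ?_ (mul_ne_zero hc (by linarith))
  fun_prop (disch := assumption)

theorem mul_deriv_riccatiSubsolution (hc : c ≠ 0) (hr : 0 < r) (hrD : r ≤ D) (hr₀ : 0 ≤ r₀)
    (hr₀D : r₀ ≤ D) :
    r * deriv (riccatiSubsolution c D r₀) r =
      c * riccatiSubsolution c D r₀ r ^ 2 * (1 + logGauge D r₀ * (r₀ / r)) := by
  have hψ := one_le_logGauge_add hr hrD hr₀ hr₀D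
  have hD : D ≠ 0 := (hr.trans_le hrD).ne'
  have hlog : HasDerivAt (logGauge D) (-(1 / D / (r / D))) r :=
    (((hasDerivAt_id r).div_const D).log (div_ne_zero hr.ne' hD)).const_sub 1
  have hgauge : HasDerivAt (fun r ↦ logGauge D r + logGauge D r₀ * (r₀ / r))
      (-(1 + logGauge D r₀ * (r₀ / r)) / r) r := by
    refine (hlog.add (((hasDerivAt_inv hr.ne').const_mul r₀).const_mul _)).congr_deriv ?_
    field_simp
    ring
  have hderiv : HasDerivAt (riccatiSubsolution c D r₀) _ r :=
    (hgauge.const_mul c).inv (mul_ne_zero hc (by positivity))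
  rw [hderiv.deriv, riccatiSubsolution]
  field_simp

theorem mul_sq_le_mul_deriv_riccatiSubsolution (hc : 0 < c) (hr : 0 < r) (hrD : r ≤ D)
    (hr₀ : 0 ≤ r₀) (hr₀D : r₀ ≤ D) :
    c * riccatiSubsolution c D r₀ r ^ 2 ≤ r * deriv (riccatiSubsolution c D r₀) r := by
  have := one_le_logGauge hr₀ hr₀D
  rw [mul_deriv_riccatiSubsolution hc.ne' hr hrD hr₀ hr₀D]
  exact le_mul_of_one_le_right (by positivity) (le_add_of_nonneg_right (by positivity))

theorem logGauge_le_two_mul (hr₀ : 0 < r₀) (hr₀D : r₀ ≤ D) (hr : r₀ / 2 ≤ r) :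
    logGauge D r ≤ 2 * logGauge D r₀ := by
  have hD : 0 < D := hr₀.trans_le hr₀D
  have hL := one_le_logGauge hr₀.le hr₀D
  have hlog : Real.log (r₀ / D) - Real.log 2 ≤ Real.log (r / D) := by
    rw [← Real.log_div (by positivity) two_ne_zero, div_right_comm]
    gcongr
  have := Real.log_two_lt_d9
  unfold logGauge at *
  linarith

theorem mul_sq_add_le_mul_deriv_riccatiSubsolution (hc : 0 < c) (hr₀ : 0 < r₀) (hr₀D : r₀ ≤ D)
    (hrD : r ≤ D) (hr : r₀ / 2 ≤ r) (hr' : r ≤ 3 / 2 * r₀) :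
    c * riccatiSubsolution c D r₀ r ^ 2 + (24 * c * logGauge D r₀)⁻¹ ≤
      r * deriv (riccatiSubsolution c D r₀) r := by
  have hr_pos : 0 < r := by linarith
  have hL := one_le_logGauge hr₀.le hr₀D
  have hψ := one_le_logGauge_add hr_pos hrD hr₀.le hr₀D
  have hψ4 : logGauge D r + logGauge D r₀ * (r₀ / r) ≤ 4 * logGauge D r₀ := by
    have : r₀ / r ≤ 2 := by rw [div_le_iff₀ hr_pos]; linarith
    have : logGauge D r₀ * (r₀ / r) ≤ logGauge D r₀ * 2 := by gcongr
    linarith [logGauge_le_two_mul hr₀ hr₀D hr]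
  have hκ : (c * (4 * logGauge D r₀))⁻¹ ≤ riccatiSubsolution c D r₀ r := by
    unfold riccatiSubsolution
    gcongr
  have hratio : 2 / 3 ≤ r₀ / r := by rw [le_div_iff₀ hr_pos]; linarith
  rw [mul_deriv_riccatiSubsolution hc.ne' hr_pos hrD hr₀.le hr₀D, mul_one_add]
  gcongr
  calc (24 * c * logGauge D r₀)⁻¹
      = c * (c * (4 * logGauge D r₀))⁻¹ ^ 2 * (logGauge D r₀ * (2 / 3)) := by field_simp; norm_num
    _ ≤ _ := by gcongr

end Riccati

section HardyMorrey

theorem norm_mem_Icc_of_mem_closedBall_half {E : Type*} [SeminormedAddCommGroup E] {x y : E}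
    (hy : y ∈ closedBall x (‖x‖ / 2)) : ‖y‖ ∈ Icc (‖x‖ / 2) (3 / 2 * ‖x‖) := by
  rw [mem_closedBall_iff_norm] at hy
  have := norm_sub_norm_le y x
  have := norm_sub_norm_le x y
  rw [norm_sub_rev] at this
  constructor <;> linarith

variable {E : Type*} [NormedAddCommGroup E] [InnerProductSpace ℝ E] {p : ℝ} {u : E → ℝ}

theorem continuousOn_hardyTerm_rpow (hp : 0 ≤ p) (hu : Continuous u) :
    ContinuousOn (fun y ↦ hardyTerm p u y ^ p) {0}ᶜ :=
  (hu.abs.continuousOn.mul (continuousOn_const.div continuous_norm.continuousOn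
    fun _ hy ↦ norm_ne_zero_iff.2 hy)).rpow_const fun _ _ ↦ .inr hp

theorem abs_rpow_le_mul_hardyTerm_rpow (hdp : Module.finrank ℝ E < p) (u : E → ℝ) {y : E}
    (hy : y ≠ 0) {R : ℝ} (hyR : ‖y‖ ≤ R) :
    |u y| ^ p ≤ (R / morreyExponent E p) ^ p * hardyTerm p u y ^ p := by
  have hH := morreyExponent_pos hdp
  have hb := hardyTerm_nonneg hdp u y
  have hR := (norm_nonneg y).trans hyR
  have := (Nat.cast_nonneg _).trans hdp.le
  rw [← Real.mul_rpow (by positivity) hb]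
  gcongr
  calc |u y| = ‖y‖ / morreyExponent E p * hardyTerm p u y := by
        have := norm_ne_zero_iff.2 hy
        rw [hardyTerm]
        field_simp
    _ ≤ _ := by gcongr

variable [MeasurableSpace E] [BorelSpace E] (μ : Measure E)

theorem integrableOn_hardyTerm_rpow [IsFiniteMeasureOnCompacts μ] (hp : 0 ≤ p) (hu : Continuous u)
    {K : Set E} (hK : IsCompact K) (h0 : 0 ∉ K) :
    IntegrableOn (fun y ↦ hardyTerm p u y ^ p) K μ :=
  ((continuousOn_hardyTerm_rpow hp hu).mono fun _ hy ↦
    ne_of_mem_of_not_mem hy h0).integrableOn_compact hK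

theorem setIntegral_abs_rpow_le_mul_setIntegral_hardyTerm_rpow [IsFiniteMeasureOnCompacts μ]
    (hdp : Module.finrank ℝ E < p) (hu : Continuous u) {K : Set E} (hK : IsCompact K) (h0 : 0 ∉ K)
    {R : ℝ} (hR : ∀ y ∈ K, ‖y‖ ≤ R) :
    ∫ y in K, |u y| ^ p ∂μ ≤
      (R / morreyExponent E p) ^ p * ∫ y in K, hardyTerm p u y ^ p ∂μ := by
  have hp : 0 ≤ p := (Nat.cast_nonneg _).trans hdp.le
  rw [← integral_const_mul]
  exact setIntegral_mono_on
    ((hu.abs.rpow_const fun _ ↦ .inr hp).continuousOn.integrableOn_compact hK)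
    ((integrableOn_hardyTerm_rpow μ hp hu hK h0).const_mul _) hK.measurableSet fun y hy ↦
      abs_rpow_le_mul_hardyTerm_rpow hdp u (ne_of_mem_of_not_mem hy h0) (hR y hy)

variable [FiniteDimensional ℝ E] [μ.IsAddHaarMeasure]

theorem div_logGauge_mul_setIntegral_le_hardyDeficit (hp : 2 ≤ p) (hdp : Module.finrank ℝ E < p)
    (hu : ContDiff ℝ 1 u) (hc : HasCompactSupport u) (h0 : 0 ∉ tsupport u) {D : ℝ}
    (hD : tsupport u ⊆ closedBall 0 D) {x : E} (hx : x ≠ 0) (hxD : ‖x‖ ≤ D) {δ : ℝ} (hδ₀ : 0 ≤ δ)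
    (hδ₁ : δ ≤ 1) (hδ : δ ≤ p / (24 * (p - Module.finrank ℝ E) ^ 2)) :
    δ / logGauge D ‖x‖ / (2 * p) * ∫ y in closedBall x (‖x‖ / 2),
      (‖fderiv ℝ u y‖ ^ p + hardyTerm p u y ^ p) ∂μ ≤ hardyDeficit μ p u := by
  have hc₀ : 0 < p - Module.finrank ℝ E := sub_pos.2 hdp
  have hH : morreyExponent E p * p = p - Module.finrank ℝ E := by
    rw [mul_comm, mul_morreyExponent (by positivity)]
  set c₀ : ℝ := p - Module.finrank ℝ E
  have hx_pos : 0 < ‖x‖ := norm_pos_iff.2 hx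
  have hL := one_le_logGauge hx_pos.le hxD
  have hpos {y} (hy : y ∈ tsupport u) : 0 < ‖y‖ := norm_pos_iff.2 (ne_of_mem_of_not_mem hy h0)
  have hle {y} (hy : y ∈ tsupport u) : ‖y‖ ≤ D := mem_closedBall_zero_iff.1 (hD hy)
  have hgain : morreyExponent E p * (δ / logGauge D ‖x‖) ≤ (24 * c₀ * logGauge D ‖x‖)⁻¹ := by
    calc morreyExponent E p * (δ / logGauge D ‖x‖)
        ≤ morreyExponent E p * (p / (24 * c₀ ^ 2) / logGauge D ‖x‖) := by
          have := (morreyExponent_pos hdp).le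
          gcongr
      _ = (24 * c₀ * logGauge D ‖x‖)⁻¹ := by
          rw [← mul_div_assoc, ← mul_div_assoc, hH]
          field_simp
  refine mul_setIntegral_le_hardyDeficit μ (κ := riccatiSubsolution c₀ D ‖x‖) hp hdp hu hc h0
    (fun y hy ↦ contDiffAt_riccatiSubsolution hc₀.ne' (hpos hy) (hle hy) hx_pos.le hxD)
    (fun y hy ↦ ?_) (by positivity) (div_le_one_of_le₀ (hδ₁.trans hL) (by positivity))
    measurableSet_closedBall fun y ⟨hyB, hy⟩ ↦ ?_
  · rw [← mul_assoc, hH]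
    exact mul_sq_le_mul_deriv_riccatiSubsolution hc₀ (hpos hy) (hle hy) hx_pos.le hxD
  · obtain ⟨hy₁, hy₂⟩ := norm_mem_Icc_of_mem_closedBall_half hyB
    rw [mul_add, ← mul_assoc, hH]
    exact (add_le_add_right hgain _).trans
      (mul_sq_add_le_mul_deriv_riccatiSubsolution hc₀ hx_pos hxD (hle hy) hy₁ hy₂)

theorem morrey_closedBall_half (hp : 1 < p) (hdp : Module.finrank ℝ E < p) (hu : ContDiff ℝ 1 u)
    {x : E} (hx : x ≠ 0) :
    μ.real (closedBall (0 : E) 1) ^ (1 / p) * |u x| ≤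
      4 / morreyExponent E p * ‖x‖ ^ morreyExponent E p *
        (∫ y in closedBall x (‖x‖ / 2),
          (‖fderiv ℝ u y‖ ^ p + hardyTerm p u y ^ p) ∂μ) ^ (1 / p) := by
  have hH := morreyExponent_pos hdp
  have hH_eq := one_sub_finrank_div (E := E) (p := p) (by positivity)
  have hρ : 0 < ‖x‖ / 2 := half_pos (norm_pos_iff.2 hx)
  have hρx : ‖x‖ / 2 ≤ ‖x‖ := half_le_self (norm_nonneg x)
  have h0 : 0 ∉ closedBall x (‖x‖ / 2) := fun h ↦
    hρ.not_ge (by simpa using (norm_mem_Icc_of_mem_closedBall_half h).1)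
  have hu_le := setIntegral_abs_rpow_le_mul_setIntegral_hardyTerm_rpow μ hdp hu.continuous
    (isCompact_closedBall x _) h0 fun y hy ↦ (norm_mem_Icc_of_mem_closedBall_half hy).2
  set ρ := ‖x‖ / 2 with hρ_def
  rw [show 3 / 2 * ‖x‖ = 3 * ρ by rw [hρ_def]; ring] at hu_le
  have hN : IntegrableOn (fun y ↦ ‖fderiv ℝ u y‖ ^ p) (closedBall x ρ) μ :=
    ((hu.continuous_fderiv one_ne_zero).norm.rpow_const fun _ ↦ .inr
      (by positivity)).continuousOn.integrableOn_compact (isCompact_closedBall _ _)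
  have hNI : 0 ≤ ∫ y in closedBall x ρ, ‖fderiv ℝ u y‖ ^ p ∂μ :=
    integral_nonneg fun y ↦ by positivity
  have hbI : 0 ≤ ∫ y in closedBall x ρ, hardyTerm p u y ^ p ∂μ :=
    integral_nonneg fun y ↦ Real.rpow_nonneg (hardyTerm_nonneg hdp u y) p
  have h := morrey_closedBall μ hp hdp hu x hρ
  simp only [Real.norm_eq_abs, hH_eq] at h
  rw [integral_add hN (integrableOn_hardyTerm_rpow μ (by positivity) hu.continuous
    (isCompact_closedBall x ρ) h0)]
  set H := morreyExponent E p
  set IN := ∫ y in closedBall x ρ, ‖fderiv ℝ u y‖ ^ p ∂μ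
  set Ib := ∫ y in closedBall x ρ, hardyTerm p u y ^ p ∂μ
  calc _ ≤ ρ ^ (-(Module.finrank ℝ E / p)) * ((3 * ρ / H) ^ p * (IN + Ib)) ^ (1 / p) +
        ρ ^ H / H * (IN + Ib) ^ (1 / p) := by
        refine h.trans (add_le_add ?_ ?_) <;> gcongr
        · exact hu_le.trans (by gcongr; linarith)
        · linarith
    _ = 4 / H * ρ ^ H * (IN + Ib) ^ (1 / p) := by
        rw [Real.mul_rpow (by positivity) (by positivity), one_div,
          Real.rpow_rpow_inv (by positivity) (by positivity), ← hH_eq, sub_eq_neg_add,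
          Real.rpow_add_one hρ.ne']
        ring
    _ ≤ _ := by gcongr

theorem rpow_mul_abs_le_hardyDeficit_rpow (hp : 2 ≤ p) (hdp : Module.finrank ℝ E < p)
    (hu : ContDiff ℝ 1 u) (hc : HasCompactSupport u) (h0 : 0 ∉ tsupport u) {D : ℝ}
    (hD : tsupport u ⊆ closedBall 0 D) {x : E} (hx : x ≠ 0) (hxD : ‖x‖ ≤ D) {δ : ℝ} (hδ₀ : 0 ≤ δ)
    (hδ₁ : δ ≤ 1) (hδ : δ ≤ p / (24 * (p - Module.finrank ℝ E) ^ 2)) :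
    (μ.real (closedBall (0 : E) 1) * (δ / (2 * p))) ^ (1 / p) * |u x| ≤
      4 / morreyExponent E p * ‖x‖ ^ morreyExponent E p *
        (logGauge D ‖x‖ * hardyDeficit μ p u) ^ (1 / p) := by
  have hH := morreyExponent_pos hdp
  have hL := one_le_logGauge (norm_nonneg x) hxD
  have hgain := div_logGauge_mul_setIntegral_le_hardyDeficit μ hp hdp hu hc h0 hD hx hxD hδ₀ hδ₁ hδ
  have hmorrey := morrey_closedBall_half μ (by linarith) hdp hu hx
  set I := ∫ y in closedBall x (‖x‖ / 2), (‖fderiv ℝ u y‖ ^ p + hardyTerm p u y ^ p) ∂μ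
  have hI : 0 ≤ I := integral_nonneg fun y ↦
    add_nonneg (by positivity) (Real.rpow_nonneg (hardyTerm_nonneg hdp u y) p)
  calc _ = (δ / (2 * p)) ^ (1 / p) * (μ.real (closedBall (0 : E) 1) ^ (1 / p) * |u x|) := by
        rw [Real.mul_rpow measureReal_nonneg (by positivity)]
        ring
    _ ≤ (δ / (2 * p)) ^ (1 / p) *
          (4 / morreyExponent E p * ‖x‖ ^ morreyExponent E p * I ^ (1 / p)) := by gcongr
    _ = 4 / morreyExponent E p * ‖x‖ ^ morreyExponent E p *
          (logGauge D ‖x‖ * (δ / logGauge D ‖x‖ / (2 * p) * I)) ^ (1 / p) := by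
        rw [show logGauge D ‖x‖ * (δ / logGauge D ‖x‖ / (2 * p) * I) = δ / (2 * p) * I by
          field_simp, Real.mul_rpow (by positivity) hI]
        ring
    _ ≤ _ := by gcongr

theorem hardy_morrey_pointwise_origin_general (hp : 2 ≤ p) (hdp : Module.finrank ℝ E < p) :
    ∃ C : ℝ, 0 < C ∧ ∀ u : E → ℝ, ContDiff ℝ 1 u → HasCompactSupport u →
      ∀ Ω : Set E, tsupport u ⊆ Ω \ {0} → ∀ D : ℝ, tsupport u ⊆ closedBall 0 D → ∀ x : E,
        |u x| * ‖x‖ ^ (Module.finrank ℝ E / p - 1) * ((1 - Real.log (‖x‖ / D))⁻¹) ^ (1 / p) ≤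
          C * ((∫ y in Ω, ‖fderiv ℝ u y‖ ^ p ∂μ) -
            ((p - Module.finrank ℝ E) / p) ^ p * ∫ y in Ω, |u y| ^ p / ‖y‖ ^ p ∂μ) ^ (1 / p) := by
  have hH := morreyExponent_pos hdp
  have : 0 < p - Module.finrank ℝ E := sub_pos.2 hdp
  obtain ⟨δ, hδ₀, hδ⟩ : ∃ δ : ℝ, 0 < δ ∧ δ ≤ min 1 (p / (24 * (p - Module.finrank ℝ E) ^ 2)) :=
    ⟨_, by positivity, le_rfl⟩
  rw [le_min_iff] at hδ
  have hV : 0 < μ.real (closedBall (0 : E) 1) :=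
    ENNReal.toReal_pos (measure_closedBall_pos μ 0 one_pos).ne' measure_closedBall_lt_top.ne
  set c := (μ.real (closedBall (0 : E) 1) * (δ / (2 * p))) ^ (1 / p)
  have hc₀ : 0 < c := by positivity
  refine ⟨4 / morreyExponent E p / c, by positivity, fun u hu hc Ω hΩ D hD x ↦ ?_⟩
  obtain ⟨hΩ, h0⟩ := subset_sdiff.1 hΩ
  rw [disjoint_singleton_right] at h0
  change _ ≤ _ * hardyDeficit (μ.restrict Ω) p u ^ (1 / p)
  rw [hardyDeficit_restrict_of_tsupport_subset μ (by positivity) hΩ]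
  have hdef := hardyDeficit_nonneg μ hp hdp hu hc h0
  by_cases hxu : x ∈ tsupport u
  swap
  · rw [image_eq_zero_of_notMem_tsupport hxu, abs_zero, zero_mul, zero_mul]
    positivity
  have hx : x ≠ 0 := ne_of_mem_of_not_mem hxu h0
  have hxD : ‖x‖ ≤ D := mem_closedBall_zero_iff.1 (hD hxu)
  have hx_pos := norm_pos_iff.2 hx
  have hL := one_le_logGauge hx_pos.le hxD
  have hexp : Module.finrank ℝ E / p - 1 = -morreyExponent E p := by
    rw [← one_sub_finrank_div (by positivity), neg_sub]
  have h := rpow_mul_abs_le_hardyDeficit_rpow μ hp hdp hu hc h0 hD hx hxD hδ₀.le hδ.1 hδ.2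
  rw [Real.mul_rpow (by positivity) hdef] at h
  rw [hexp, Real.rpow_neg hx_pos.le, ← logGauge, Real.inv_rpow (by positivity), ← div_eq_mul_inv,
    ← div_eq_mul_inv, div_le_iff₀ (by positivity), div_le_iff₀ (by positivity), div_mul_eq_mul_div,
    div_mul_eq_mul_div, div_mul_eq_mul_div, le_div_iff₀ hc₀]
  linarith

end HardyMorrey

/-- pointwise Hardy–Morrey estimate with one point at the origin. -/
theorem hardy_morrey_pointwise_origin (n : ℕ) (hn : 2 ≤ n) (p : ℝ) (hp : (n : ℝ) < p) :
    ∃ Θ C : ℝ, 0 ≤ Θ ∧ 0 < C ∧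
      ∀ Ω : Set (EuclideanSpace ℝ (Fin n)), IsOpen Ω → IsConnected Ω →
        Bornology.IsBounded Ω → (0 : EuclideanSpace ℝ (Fin n)) ∈ Ω →
        ∀ u : EuclideanSpace ℝ (Fin n) → ℝ, ContDiff ℝ (⊤ : ℕ∞) u →
          HasCompactSupport u → tsupport u ⊆ Ω \ {0} →
          ∀ D : ℝ, Real.exp Θ * Metric.diam Ω ≤ D →
          ∀ x ∈ Ω,
            |u x| * ‖x‖ ^ ((n : ℝ) / p - 1) * ((1 - Real.log (‖x‖ / D))⁻¹) ^ (1 / p) ≤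
              C * ((∫ y in Ω, ‖fderiv ℝ u y‖ ^ p)
                - ((p - n) / p) ^ p * ∫ y in Ω, |u y| ^ p / ‖y‖ ^ p) ^ (1 / p) := by
  have h2p : 2 ≤ p := (Nat.ofNat_le_cast.2 hn).trans hp.le
  obtain ⟨C, hC, h⟩ := hardy_morrey_pointwise_origin_general
    (volume : Measure (EuclideanSpace ℝ (Fin n))) h2p (by simpa using hp)
  simp only [finrank_euclideanSpace_fin] at h
  refine ⟨0, C, le_rfl, hC, fun Ω _ _ hΩ h0 u hu hc hsupp D hD x _ ↦
    h u (hu.of_le (by exact_mod_cast le_top)) hc Ω hsupp D (fun y hy ↦ ?_) x⟩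
  rw [Real.exp_zero, one_mul] at hD
  exact (dist_le_diam_of_mem hΩ (hsupp hy).1 h0).trans hD
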